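/- arXiv:1210.3353 — 2 statements merged into one kernel-verified Lean document; each statement's English description precedes it below -/
import Mathlib

section
/- Let F be a field of characteristic ≠ 2 and R a simple associative unital F-algebra with an involution * of the first kind, with S ⊊ R, with dim_{Z(R)} R > 4, and assume S is not a commutative set (there exist a, b ∈ S with ab ≠ ba). Then (K∘K)³ = R; in particular K⁶ = R. -/
/-- The set of skew-symmetric elements. -/
def skewSet12 (R : Type*) [Ring R] [StarRing R] : Set R := {r : R | star r = -r}

/-- `K∘K`: the additive subgroup generated by all `ab + ba` with `a, b ∈ K`. -/
def jordanKK12 (R : Type*) [Ring R] [StarRing R] : AddSubgroup R :=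
  AddSubgroup.closure {z : R | ∃ a ∈ skewSet12 R, ∃ b ∈ skewSet12 R, z = a * b + b * a}

/-!
Let `T = [K, K] ∘ K`, an additive subgroup of `K ∘ K` that consists of symmetric elements.
Unlike `K ∘ K`, it is visibly stable under `t ↦ t ∘ s` for symmetric `s` and under `t ↦ [t, k]` for
skew `k`, hence under `t ↦ t x + x* t` for every `x`. Composing two such maps shows that `T`
contains `x t y + (x t y)*`, so if `T ≠ 0`, simplicity gives `r + r* ∈ T` for every `r`, and
`S ⊆ T ⊆ K ∘ K`. If `T = 0`, then every commutator `l` of skew elements satisfies `l R l = 0`, so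
the skew elements commute.

If the skew elements commute and are not all zero, then some skew `a` has a nonzero central square,
and its centralizer is spanned by `1` and `a`; the elements anticommuting with `a` contribute at
most two more dimensions, so `R` has dimension at most `4` over its center.

Finally `S²` is a Lie ideal of `R`. When `S` is not commutative, `S²` contains all commutators, by
Herstein's theorem on Lie ideals, and then `S³` contains a nonzero two-sided ideal.
-/

namespace SkewJordan

section Simple

variable {R : Type*} [Ring R]

theorem eq_top_of_forall_mul_mul_mem [IsSimpleRing R] {c : R} (hc : c ≠ 0) {A : AddSubgroup R}
    (hA : ∀ x y, x * c * y ∈ A) : A = ⊤ := by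
  have hc_mem : c ∈ TwoSidedIdeal.span {c} := TwoSidedIdeal.subset_span rfl
  have hspan : TwoSidedIdeal.span {c} = ⊤ := by
    refine (eq_bot_or_eq_top _).resolve_left fun hbot => hc ?_
    rwa [hbot, TwoSidedIdeal.mem_bot] at hc_mem
  refine (AddSubgroup.eq_top_iff' A).2 fun r => ?_
  have hr : r ∈ TwoSidedIdeal.span {c} := hspan ▸ trivial
  rw [TwoSidedIdeal.mem_span_iff_mem_addSubgroup_closure] at hr
  refine (AddSubgroup.closure_le A).2 ?_ hr
  rintro _ ⟨_, ⟨x, -, _, rfl, rfl⟩, y, -, rfl⟩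
  exact hA x y

theorem eq_zero_of_forall_mul_mul_self_eq_zero [IsSimpleRing R] {c : R}
    (h : ∀ x, c * x * c = 0) : c = 0 := by
  by_contra hc
  have hker : (AddMonoidHom.mulLeft c).ker = ⊤ :=
    eq_top_of_forall_mul_mul_mem hc fun x y => by simp [AddMonoidHom.mem_ker, ← mul_assoc, h]
  have h_one : (1 : R) ∈ (AddMonoidHom.mulLeft c).ker := hker ▸ AddSubgroup.mem_top 1
  exact hc (by simpa [AddMonoidHom.mem_ker] using h_one)

/-- The subring of all `x` with `[x, R] ⊆ U`, Herstein's device for showing that an additive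
subgroup `U` contains all commutators. -/
def lieTransporter (U : AddSubgroup R) : Subring R where
  carrier := {x | ∀ y, ⁅x, y⁆ ∈ U}
  zero_mem' y := by simp [Ring.lie_def]
  one_mem' y := by simp [Ring.lie_def]
  add_mem' {p q} hp hq y := by
    convert U.add_mem (hp y) (hq y) using 1
    simp only [Ring.lie_def]
    noncomm_ring
  neg_mem' {p} hp y := by
    convert U.neg_mem (hp y) using 1
    simp only [Ring.lie_def]
    noncomm_ring
  mul_mem' {p q} hp hq y := by
    convert U.add_mem (hp (q * y)) (hq (y * p)) using 1
    simp only [Ring.lie_def]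
    noncomm_ring

theorem lie_mem_of_not_commute [IsSimpleRing R] {U : AddSubgroup R}
    (hU : ∀ u ∈ U, ∀ x : R, ⁅u, x⁆ ∈ U) {a b : R} (ha : a ∈ U) (hb : b ∈ U) (hab : ¬Commute a b)
    (x y : R) : ⁅x, y⁆ ∈ U := by
  have hlie_mul : ∀ r, ⁅a, b⁆ * r ∈ lieTransporter U := fun r => by
    have h₁ : ⁅a, b * r⁆ ∈ lieTransporter U := hU _ (hU a ha _)
    have h₂ : b * ⁅a, r⁆ ∈ lieTransporter U := mul_mem (hU b hb) (hU _ (hU a ha r))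
    convert sub_mem h₁ h₂ using 1
    simp only [Ring.lie_def]
    noncomm_ring
  have htop : (lieTransporter U).toAddSubgroup = ⊤ := by
    refine eq_top_of_forall_mul_mul_mem (c := ⁅a, b⁆) (sub_ne_zero.2 hab) fun p q => ?_
    have h₂ : ⁅⁅a, b⁆ * q, p⁆ ∈ lieTransporter U := hU _ (hlie_mul q p)
    change p * ⁅a, b⁆ * q ∈ lieTransporter U
    convert sub_mem (hlie_mul (q * p)) h₂ using 1
    simp only [Ring.lie_def]
    noncomm_ring
  have hx : x ∈ (lieTransporter U).toAddSubgroup := htop ▸ AddSubgroup.mem_top x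
  exact hx y

theorem eq_top_of_mul_lie_mem [IsSimpleRing R] {a b : R} (hab : ¬Commute a b) {A : AddSubgroup R}
    (hA : ∀ x y : R, x * ⁅y, a⁆ ∈ A) : A = ⊤ := by
  refine eq_top_of_forall_mul_mul_mem (c := ⁅b, a⁆) (sub_ne_zero.2 (Ne.symm hab)) fun x y => ?_
  convert sub_mem (hA x (b * y)) (hA (x * b) y) using 1
  simp only [Ring.lie_def]
  noncomm_ring

theorem eq_zero_of_add_self_eq_zero [Invertible (2 : R)] {x : R} (hx : x + x = 0) : x = 0 := by
  rw [← invOf_mul_cancel_left (2 : R) x, two_mul, hx, mul_zero]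

theorem commute_invOf_two [Invertible (2 : R)] (x : R) : Commute (⅟2 : R) x :=
  (Commute.ofNat_left 2 x).invOf_left

end Simple

section Rank

variable {R : Type*} [Ring R] {a : R}

theorem exists_center_smul_eq_one [IsSimpleRing R] {z : R} (hz : z ∈ Subring.center R)
    (hz0 : z ≠ 0) : ∃ w : Subring.center R, w • z = 1 := by
  obtain ⟨w, hw⟩ := (IsSimpleRing.isField_center R).mul_inv_cancel (a := ⟨z, hz⟩)
    fun h => hz0 (congrArg Subtype.val h)
  refine ⟨w, ?_⟩
  rw [Subring.smul_def, smul_eq_mul, Subring.mem_center_iff.1 hz]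
  exact congrArg Subtype.val hw

theorem exists_commute_add_anticommute [Invertible (2 : R)] {w : Subring.center R}
    (hw : w • (a * a) = 1) (x : R) :
    ∃ c t : R, Commute c a ∧ t * a = -(a * t) ∧ x = c + t := by
  have hright : w • (a * x * a) * a = a * x := by
    rw [smul_mul_assoc, mul_assoc, ← mul_smul_comm, hw, mul_one]
  have hleft : a * w • (a * x * a) = x * a := by
    rw [mul_smul_comm, ← mul_assoc, ← mul_assoc, mul_assoc (a * a), ← smul_mul_assoc, hw, one_mul]
  have ha := commute_invOf_two a
  refine ⟨⅟2 * (x + w • (a * x * a)), ⅟2 * (x - w • (a * x * a)), ?_, ?_, ?_⟩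
  · refine ha.mul_left ?_
    rw [commute_iff_eq, add_mul, mul_add, hright, hleft, add_comm]
  · rw [ha.symm.left_comm, mul_assoc, ← mul_neg, sub_mul, mul_sub a, hright, hleft, neg_sub]
  · rw [← mul_add, add_add_sub_cancel, ← two_mul, invOf_mul_cancel_left]

theorem eq_zero_or_eq_zero_of_center_smul_eq_zero [IsSimpleRing R] {z : Subring.center R} {x : R}
    (h : z • x = 0) : z = 0 ∨ x = 0 := by
  by_cases hz : z = 0
  · exact .inl hz
  · obtain ⟨w, hw⟩ := exists_center_smul_eq_one z.2 (Subtype.coe_ne_coe.2 hz)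
    exact .inr <| by
      rw [← one_mul x, ← hw, smul_mul_assoc, ← smul_eq_mul (z : R), ← Subring.smul_def, h,
        smul_zero]

theorem commute_mul_of_anticommute {s t : R} (hs : s * a = -(a * s)) (ht : t * a = -(a * t)) :
    Commute (s * t) a := by
  rw [commute_iff_eq, mul_assoc, ht, mul_neg, ← mul_assoc, hs, neg_mul, neg_neg, mul_assoc]

/-- Here `t * t` commutes with `a`, so it is `z + z' a`; as it also commutes with `t`, which
anticommutes with `a`, the term `z' a` vanishes. -/
theorem mul_self_mem_center_of_anticommute [IsSimpleRing R] [Invertible (2 : R)]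
    {w : Subring.center R} (hw : w • (a * a) = 1)
    (hcent : ∀ x, Commute x a → x ∈ Submodule.span (Subring.center R) {1, a}) {t : R}
    (ht : t * a = -(a * t)) : t * t ∈ Subring.center R := by
  obtain ⟨z, z', hz⟩ := Submodule.mem_span_pair.1 (hcent _ (commute_mul_of_anticommute ht ht))
  have hzta : z' • (a * t) = 0 := by
    refine eq_zero_of_add_self_eq_zero ?_
    have hcomm : (z • 1 + z' • a) * t = t * (z • 1 + z' • a) := by rw [hz, mul_assoc]
    simpa [add_mul, mul_add, ht, eq_neg_iff_add_eq_zero] using hcomm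
  rw [← hz]
  rcases eq_zero_or_eq_zero_of_center_smul_eq_zero hzta with rfl | hat
  · rw [zero_smul, add_zero]
    exact Subring.mem_center_iff.2 fun x => by simp
  · have ht0 : t = 0 := by
      rw [← one_mul t, ← hw, smul_mul_assoc, mul_assoc, hat, mul_zero, smul_zero]
    simp [hz, ht0]

theorem exists_anticommute_mul_self_ne_zero [IsSimpleRing R] [Invertible (2 : R)]
    {w : Subring.center R} (hw : w • (a * a) = 1) {t : R} (ht : t * a = -(a * t)) (ht0 : t ≠ 0) :
    ∃ s : R, s * a = -(a * s) ∧ s * s ≠ 0 := by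
  by_contra! hsq
  have hadd : ∀ {u v : R}, u * a = -(a * u) → v * a = -(a * v) → u * v + v * u = 0 := by
    intro u v hu hv
    have huv := hsq (v + u) (by rw [add_mul, mul_add, hu, hv, neg_add])
    simpa [add_mul, mul_add, hsq u hu, hsq v hv] using huv
  refine ht0 (eq_zero_of_forall_mul_mul_self_eq_zero fun x => ?_)
  obtain ⟨c, u, hc, hu, rfl⟩ := exists_commute_add_anticommute hw x
  have htc : t * c * a = -(a * (t * c)) := by rw [mul_assoc, hc.eq, ← mul_assoc, ht]; noncomm_ring
  have htct : t * c * t = 0 := by simpa [← mul_assoc, hsq t ht] using hadd ht htc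
  have htut : t * u * t = 0 := by
    rw [eq_neg_of_add_eq_zero_left (hadd ht hu), neg_mul, mul_assoc, hsq t ht, mul_zero, neg_zero]
  rw [mul_add, add_mul, htct, htut, add_zero]

theorem rank_le_four_of_span_eq_top {S M : Type*} [Ring S] [StrongRankCondition S]
    [AddCommGroup M] [Module S M] {v₁ v₂ v₃ v₄ : M}
    (h : Submodule.span S {v₁, v₂, v₃, v₄} = ⊤) : Module.rank S M ≤ 4 := by
  classical
  have hle := rank_span_finset_le (R := S) ({v₁, v₂, v₃, v₄} : Finset M)
  rw [Finset.coe_insert, Finset.coe_insert, Finset.coe_pair, h, rank_top] at hle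
  exact hle.trans (mod_cast Finset.card_le_four)

theorem mem_span_pair_mul_of_anticommute {v : Subring.center R} {s t : R}
    (hv : v • (s * s) = 1)
    (hcent : ∀ x, Commute x a → x ∈ Submodule.span (Subring.center R) {1, a})
    (hs : s * a = -(a * s)) (ht : t * a = -(a * t)) :
    t ∈ Submodule.span (Subring.center R) {s, s * a} := by
  obtain ⟨z, z', hz⟩ := Submodule.mem_span_pair.1 (hcent _ (commute_mul_of_anticommute hs ht))
  refine Submodule.mem_span_pair.2 ⟨v * z, v * z', ?_⟩
  calc (v * z) • s + (v * z') • (s * a) = v • (s * (z • 1 + z' • a)) := by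
        rw [mul_add, mul_smul_comm, mul_smul_comm, mul_one, smul_add, mul_smul, mul_smul]
    _ = t := by rw [hz, ← mul_assoc, ← smul_mul_assoc, hv, one_mul]

/-- If `s` is invertible and anticommutes with `a`, then `R = C(a) ⊕ s C(a)`. -/
theorem rank_le_four_of_centralizer_le_span [IsSimpleRing R] [Invertible (2 : R)]
    (ha : a * a ∈ Subring.center R) (ha0 : a * a ≠ 0)
    (hcent : ∀ x, Commute x a → x ∈ Submodule.span (Subring.center R) {1, a}) :
    Module.rank (Subring.center R) R ≤ 4 := by
  obtain ⟨w, hw⟩ := exists_center_smul_eq_one ha ha0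
  obtain ⟨s, hs⟩ : ∃ s : R, ∀ t, t * a = -(a * t) →
      t ∈ Submodule.span (Subring.center R) {s, s * a} := by
    by_cases hanti : ∀ t : R, t * a = -(a * t) → t = 0
    · exact ⟨0, fun t ht => by simp [hanti t ht]⟩
    · push Not at hanti
      obtain ⟨t, ht, ht0⟩ := hanti
      obtain ⟨s, hsa, hss⟩ := exists_anticommute_mul_self_ne_zero hw ht ht0
      obtain ⟨v, hv⟩ := exists_center_smul_eq_one
        (mul_self_mem_center_of_anticommute hw hcent hsa) hss
      exact ⟨s, fun t ht => mem_span_pair_mul_of_anticommute hv hcent hsa ht⟩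
  refine rank_le_four_of_span_eq_top (v₁ := 1) (v₂ := a) (v₃ := s) (v₄ := s * a) ?_
  refine Submodule.eq_top_iff'.2 fun x => ?_
  obtain ⟨c, t, hc, ht, rfl⟩ := exists_commute_add_anticommute hw x
  exact add_mem (Submodule.span_mono (by simp [Set.insert_subset_iff]) (hcent c hc))
    (Submodule.span_mono (by simp [Set.insert_subset_iff]) (hs t ht))

end Rank

section Involution

variable {R : Type*} [Ring R] [StarRing R]

theorem lie_mem_skewAdjoint {a b : R} (ha : a ∈ skewAdjoint R) (hb : b ∈ skewAdjoint R) :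
    ⁅a, b⁆ ∈ skewAdjoint R := by
  simp only [skewAdjoint.mem_iff] at *
  simp [Ring.lie_def, ha, hb]

theorem jordan_mem_skewAdjoint {s a : R} (hs : s ∈ selfAdjoint R) (ha : a ∈ skewAdjoint R) :
    s * a + a * s ∈ skewAdjoint R := by
  simp only [skewAdjoint.mem_iff, selfAdjoint.mem_iff] at *
  simp only [star_add, star_mul, hs, ha]
  noncomm_ring

theorem jordan_mem_selfAdjoint {a b : R} (ha : a ∈ skewAdjoint R) (hb : b ∈ skewAdjoint R) :
    a * b + b * a ∈ selfAdjoint R := by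
  simp only [skewAdjoint.mem_iff, selfAdjoint.mem_iff] at *
  simp [ha, hb, add_comm]

theorem exists_selfAdjoint_add_skewAdjoint [Invertible (2 : R)] (x : R) :
    ∃ s ∈ selfAdjoint R, ∃ k ∈ skewAdjoint R, x = s + k := by
  have hstar : star (⅟2 : R) = ⅟2 := ((IsSelfAdjoint.invOf_iff (2 : R)).2 (.ofNat 2)).star_eq
  refine ⟨⅟2 * (x + star x), ?_, ⅟2 * (x - star x), ?_, ?_⟩
  · rw [selfAdjoint.mem_iff, star_mul, hstar, (commute_invOf_two _).eq, star_add, star_star,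
      add_comm]
  · rw [skewAdjoint.mem_iff, star_mul, hstar, ← (commute_invOf_two _).eq, star_sub, star_star,
      ← mul_neg, neg_sub]
  · rw [← mul_add, add_add_sub_cancel, ← two_mul, invOf_mul_cancel_left]

theorem mul_self_mem_center [Invertible (2 : R)]
    (hK : ∀ a ∈ skewAdjoint R, ∀ b ∈ skewAdjoint R, Commute a b) {a : R}
    (ha : a ∈ skewAdjoint R) : a * a ∈ Subring.center R := by
  refine Subring.mem_center_iff.2 fun x => ?_
  obtain ⟨s, hs, k, hk, rfl⟩ := exists_selfAdjoint_add_skewAdjoint x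
  have hsa : Commute s (a * a) := by
    have hjordan := hK a ha _ (jordan_mem_skewAdjoint hs ha)
    rw [commute_iff_eq, ← sub_eq_zero] at hjordan ⊢
    rw [← neg_eq_zero, ← hjordan]
    noncomm_ring
  exact hsa.add_left ((hK k hk a ha).mul_right (hK k hk a ha))

theorem mul_mem_center [Invertible (2 : R)]
    (hK : ∀ a ∈ skewAdjoint R, ∀ b ∈ skewAdjoint R, Commute a b) {a b : R}
    (ha : a ∈ skewAdjoint R) (hb : b ∈ skewAdjoint R) : a * b ∈ Subring.center R := by
  have hhalf : ⅟2 ∈ Subring.center R :=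
    Subring.mem_center_iff.2 fun x => (commute_invOf_two x).symm
  have hpolar : ⅟2 * ((a + b) * (a + b) - a * a - b * b) = a * b := by
    have hpolar_add : (a + b) * (a + b) - a * a - b * b = a * b + b * a := by noncomm_ring
    rw [invOf_mul_eq_iff_eq_mul_left, two_mul, hpolar_add, (hK b hb a ha).eq]
  rw [← hpolar]
  exact mul_mem hhalf (sub_mem (sub_mem (mul_self_mem_center hK (add_mem ha hb))
    (mul_self_mem_center hK ha)) (mul_self_mem_center hK hb))

theorem exists_skewAdjoint_mul_self_ne_zero [IsSimpleRing R] [Invertible (2 : R)]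
    (hK : ∀ a ∈ skewAdjoint R, ∀ b ∈ skewAdjoint R, Commute a b) {k : R}
    (hk : k ∈ skewAdjoint R) (hk0 : k ≠ 0) : ∃ a ∈ skewAdjoint R, a * a ≠ 0 := by
  by_contra! hsq
  have hmul : ∀ l ∈ skewAdjoint R, k * l = 0 := fun l hl => by
    have hkl := hsq (k + l) (add_mem hk hl)
    refine eq_zero_of_add_self_eq_zero ?_
    simpa [add_mul, mul_add, hsq k hk, hsq l hl, (hK l hl k hk).eq] using hkl
  refine hk0 (eq_zero_of_forall_mul_mul_self_eq_zero fun x => ?_)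
  obtain ⟨s, hs, l, hl, rfl⟩ := exists_selfAdjoint_add_skewAdjoint x
  have hksk : k * s * k = 0 := by
    simpa [mul_add, ← mul_assoc, hsq k hk] using hmul _ (jordan_mem_skewAdjoint hs hk)
  rw [mul_add, add_mul, hksk, hmul l hl, zero_mul, add_zero]

theorem mem_span_of_commute_skewAdjoint [IsSimpleRing R] [Invertible (2 : R)]
    (hK : ∀ a ∈ skewAdjoint R, ∀ b ∈ skewAdjoint R, Commute a b) {a x : R}
    (ha : a ∈ skewAdjoint R) (ha0 : a * a ≠ 0) (hx : Commute x a) :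
    x ∈ Submodule.span (Subring.center R) {1, a} := by
  obtain ⟨w, hw⟩ := exists_center_smul_eq_one (mul_self_mem_center hK ha) ha0
  obtain ⟨s, hs, k, hk, rfl⟩ := exists_selfAdjoint_add_skewAdjoint x
  have hsa : Commute s a := by simpa using hx.sub_left (hK k hk a ha)
  have hs_mem : s ∈ Subring.center R := by
    have hmem := mul_mem (Subring.mem_center_iff.2 fun x => (commute_invOf_two x).symm)
      (mul_mem w.2 (mul_mem_center hK ha (jordan_mem_skewAdjoint hs ha)))
    have hs_eq : ⅟2 * (w * (a * (s * a + a * s))) = s := by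
      rw [hsa.eq, ← two_mul, ← mul_assoc a, (Commute.ofNat_right a 2).eq, mul_assoc 2,
        (Commute.ofNat_right (w : R) 2).left_comm, invOf_mul_cancel_left, ← mul_assoc a,
        ← mul_assoc, ← smul_eq_mul (w : R), ← Subring.smul_def, hw, one_mul]
    rwa [hs_eq] at hmem
  refine Submodule.mem_span_pair.2 ⟨⟨s, hs_mem⟩, w * ⟨a * k, mul_mem_center hK ha hk⟩, ?_⟩
  have hk_eq : w • (a * k * a) = k := by
    rw [mul_assoc, hK k hk a ha, ← mul_assoc, ← smul_mul_assoc, hw, one_mul]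
  rw [mul_smul, Subring.smul_def ⟨s, _⟩, Subring.smul_def ⟨a * k, _⟩, smul_eq_mul, smul_eq_mul,
    mul_one, hk_eq]

theorem rank_le_four_of_skewAdjoint_commute [IsSimpleRing R] [Invertible (2 : R)]
    (hK : ∀ a ∈ skewAdjoint R, ∀ b ∈ skewAdjoint R, Commute a b) :
    Module.rank (Subring.center R) R ≤ 4 := by
  by_cases hbot : ∃ k ∈ skewAdjoint R, k ≠ 0
  · obtain ⟨k, hk, hk0⟩ := hbot
    obtain ⟨a, ha, ha0⟩ := exists_skewAdjoint_mul_self_ne_zero hK hk hk0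
    exact rank_le_four_of_centralizer_le_span (mul_self_mem_center hK ha) ha0
      fun x hx => mem_span_of_commute_skewAdjoint hK ha ha0 hx
  · push Not at hbot
    have hstar : ∀ x : R, star x = x := fun x => by
      obtain ⟨s, hs, k, hk, rfl⟩ := exists_selfAdjoint_add_skewAdjoint x
      rwa [hbot k hk, add_zero]
    have hcomm : ∀ x y : R, x * y = y * x := fun x y => by
      rw [← hstar (x * y), star_mul, hstar, hstar]
    refine rank_le_four_of_span_eq_top (v₁ := 1) (v₂ := 0) (v₃ := 0) (v₄ := 0) ?_
    refine Submodule.eq_top_iff'.2 fun x => ?_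
    have hx : (⟨x, Subring.mem_center_iff.2 fun y => hcomm y x⟩ : Subring.center R) • (1 : R) = x :=
      mul_one x
    exact hx ▸ Submodule.smul_mem _ _ (Submodule.subset_span (Set.mem_insert _ _))

end Involution

section SkewSquares

variable {R : Type*} [Ring R] [StarRing R]

variable (R) in
/-- The additive subgroup `[K, K] ∘ K` generated by all `[a, b] ∘ k` with `a, b, k` skew: a part of
`K ∘ K` which is stable under `t ↦ t x + x* t`. -/
def commutatorJordan : AddSubgroup R :=
  AddSubgroup.closure {z | ∃ a ∈ skewAdjoint R, ∃ b ∈ skewAdjoint R, ∃ k ∈ skewAdjoint R,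
    z = ⁅a, b⁆ * k + k * ⁅a, b⁆}

theorem mem_commutatorJordan {a b k : R} (ha : a ∈ skewAdjoint R) (hb : b ∈ skewAdjoint R)
    (hk : k ∈ skewAdjoint R) : ⁅a, b⁆ * k + k * ⁅a, b⁆ ∈ commutatorJordan R :=
  AddSubgroup.subset_closure ⟨a, ha, b, hb, k, hk, rfl⟩

theorem commutatorJordan_le_jordanKK12 : commutatorJordan R ≤ jordanKK12 R := by
  refine (AddSubgroup.closure_le _).2 ?_
  rintro _ ⟨a, ha, b, hb, k, hk, rfl⟩
  exact AddSubgroup.subset_closure ⟨_, lie_mem_skewAdjoint ha hb, k, hk, rfl⟩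

theorem commutatorJordan_le_selfAdjoint : commutatorJordan R ≤ selfAdjoint R := by
  refine (AddSubgroup.closure_le _).2 ?_
  rintro _ ⟨a, ha, b, hb, k, hk, rfl⟩
  exact jordan_mem_selfAdjoint (lie_mem_skewAdjoint ha hb) hk

theorem lie_mem_commutatorJordan {c t : R} (hc : c ∈ skewAdjoint R)
    (ht : t ∈ commutatorJordan R) : ⁅t, c⁆ ∈ commutatorJordan R := by
  refine (AddSubgroup.closure_le ((commutatorJordan R).comap
    (AddMonoidHom.mulRight c - AddMonoidHom.mulLeft c))).2 ?_ ht
  rintro _ ⟨a, ha, b, hb, k, hk, rfl⟩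
  have h₁ := mem_commutatorJordan (lie_mem_skewAdjoint ha hc) hb hk
  have h₂ := mem_commutatorJordan ha (lie_mem_skewAdjoint hb hc) hk
  have h₃ := mem_commutatorJordan ha hb (lie_mem_skewAdjoint hk hc)
  change _ * c - c * _ ∈ commutatorJordan R
  convert add_mem (add_mem h₁ h₂) h₃ using 1
  simp only [Ring.lie_def]
  noncomm_ring

theorem jordan_mem_commutatorJordan {s t : R} (hs : s ∈ selfAdjoint R)
    (ht : t ∈ commutatorJordan R) : t * s + s * t ∈ commutatorJordan R := by
  refine (AddSubgroup.closure_le ((commutatorJordan R).comap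
    (AddMonoidHom.mulRight s + AddMonoidHom.mulLeft s))).2 ?_ ht
  rintro _ ⟨a, ha, b, hb, k, hk, rfl⟩
  have hsa := jordan_mem_skewAdjoint hs ha
  have hsb := jordan_mem_skewAdjoint hs hb
  have h₀ := mem_commutatorJordan ha hb (jordan_mem_skewAdjoint hs hk)
  have h₁ := mem_commutatorJordan hk hsa hb
  have h₂ := mem_commutatorJordan hk hb hsa
  have h₃ := mem_commutatorJordan hk hsb ha
  have h₄ := mem_commutatorJordan hk ha hsb
  change _ * s + s * _ ∈ commutatorJordan R
  convert sub_mem h₀ (sub_mem (add_mem h₁ h₂) (add_mem h₃ h₄)) using 1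
  simp only [Ring.lie_def]
  noncomm_ring

theorem mul_add_star_mul_mem_commutatorJordan [Invertible (2 : R)] {t : R}
    (ht : t ∈ commutatorJordan R) (x : R) : t * x + star x * t ∈ commutatorJordan R := by
  obtain ⟨s, hs, k, hk, rfl⟩ := exists_selfAdjoint_add_skewAdjoint x
  convert add_mem (jordan_mem_commutatorJordan hs ht) (lie_mem_commutatorJordan hk ht) using 1
  rw [star_add, selfAdjoint.mem_iff.1 hs, skewAdjoint.mem_iff.1 hk, Ring.lie_def]
  noncomm_ring

theorem selfAdjoint_le_of_mul_add_star_mul_mem [IsSimpleRing R] [Invertible (2 : R)]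
    {T : AddSubgroup R} (hT : ∀ t ∈ T, ∀ x, t * x + star x * t ∈ T) {t : R} (ht : t ∈ T)
    (ht_self : t ∈ selfAdjoint R) (ht0 : t ≠ 0) : selfAdjoint R ≤ T := by
  have htop : T.comap (AddMonoidHom.id R + (starAddEquiv : R ≃+ R).toAddMonoidHom) = ⊤ := by
    refine eq_top_of_forall_mul_mul_mem ht0 fun x y => ?_
    change x * t * y + star (x * t * y) ∈ T
    convert sub_mem (hT _ (hT t ht (star x)) y) (hT t ht (star x * y)) using 1
    simp only [star_mul, star_star, selfAdjoint.mem_iff.1 ht_self]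
    noncomm_ring
  intro s hs
  have hhalf : ⅟2 * s + star (⅟2 * s) ∈ T := AddSubgroup.mem_comap.1 (htop ▸ AddSubgroup.mem_top _)
  rwa [star_mul, selfAdjoint.mem_iff.1 hs,
    ((IsSelfAdjoint.invOf_iff (2 : R)).2 (.ofNat 2)).star_eq, ← (commute_invOf_two s).eq,
    ← mul_add, ← two_mul, invOf_mul_cancel_left] at hhalf

theorem eq_zero_of_forall_jordan_eq_zero [IsSimpleRing R] [Invertible (2 : R)] {l : R}
    (hl : l ∈ skewAdjoint R) (h : ∀ k ∈ skewAdjoint R, l * k + k * l = 0) : l = 0 := by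
  have hll : l * l = 0 := eq_zero_of_add_self_eq_zero (h l hl)
  refine eq_zero_of_forall_mul_mul_self_eq_zero fun x => ?_
  obtain ⟨s, hs, k, hk, rfl⟩ := exists_selfAdjoint_add_skewAdjoint x
  have hlkl : l * k * l = 0 := by
    rw [eq_neg_of_add_eq_zero_left (h k hk), neg_mul, mul_assoc, hll, mul_zero, neg_zero]
  have hlsl : l * s * l = 0 := by
    refine eq_zero_of_add_self_eq_zero ?_
    simpa [mul_add, add_mul, ← mul_assoc, hll, mul_assoc s] using h _ (jordan_mem_skewAdjoint hs hl)
  rw [mul_add, add_mul, hlsl, hlkl, add_zero]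

theorem selfAdjoint_le_jordanKK12 [IsSimpleRing R] [Invertible (2 : R)] {a b : R}
    (ha : a ∈ skewAdjoint R) (hb : b ∈ skewAdjoint R) (hab : ¬Commute a b) :
    selfAdjoint R ≤ jordanKK12 R := by
  obtain ⟨k, hk, hne⟩ : ∃ k ∈ skewAdjoint R, ⁅a, b⁆ * k + k * ⁅a, b⁆ ≠ 0 := by
    by_contra! h
    exact hab (sub_eq_zero.1 (eq_zero_of_forall_jordan_eq_zero (lie_mem_skewAdjoint ha hb) h))
  have hmem := mem_commutatorJordan ha hb hk
  exact (selfAdjoint_le_of_mul_add_star_mul_mem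
    (fun t ht => mul_add_star_mul_mem_commutatorJordan ht) hmem
    (commutatorJordan_le_selfAdjoint hmem) hne).trans commutatorJordan_le_jordanKK12

end SkewSquares

section Powers

variable {R : Type*} [Ring R]

theorem closure_eq_univ_of_pow_eq_top {A : AddSubgroup R} {n : ℕ} {s : Set R}
    (hA : A.toIntSubmodule ^ n = ⊤)
    (hs : ∀ f : Fin n → A, (List.ofFn fun i => (f i : R)).prod ∈ s) :
    (AddSubgroup.closure s : Set R) = Set.univ := by
  refine Set.eq_univ_of_univ_subset fun r _ => ?_
  have hr : r ∈ A.toIntSubmodule ^ n := hA ▸ Submodule.mem_top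
  rw [Submodule.pow_eq_span_pow_set] at hr
  refine (Submodule.span_le (p := (AddSubgroup.closure s).toIntSubmodule)).2 (fun x hx => ?_) hr
  obtain ⟨f, rfl⟩ := Set.mem_pow.1 hx
  exact AddSubgroup.subset_closure (hs f)

variable [StarRing R]

theorem lie_mem_selfAdjoint_mul_selfAdjoint {u : R}
    (hu : u ∈ (selfAdjoint R).toIntSubmodule * (selfAdjoint R).toIntSubmodule) (x : R) :
    ⁅u, x⁆ ∈ (selfAdjoint R).toIntSubmodule * (selfAdjoint R).toIntSubmodule := by
  induction hu using Submodule.mul_induction_on' with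
  | mem_mul_mem p hp q hq =>
    have hpx : p * star x + x * p ∈ selfAdjoint R := by
      simp [selfAdjoint.mem_iff, selfAdjoint.mem_iff.1 hp, add_comm]
    have hqx : q * x + star x * q ∈ selfAdjoint R := by
      simp [selfAdjoint.mem_iff, selfAdjoint.mem_iff.1 hq, add_comm]
    convert sub_mem (Submodule.mul_mem_mul hp hqx) (Submodule.mul_mem_mul hpx hq) using 1
    rw [Ring.lie_def]
    noncomm_ring
  | add u _ v _ hu hv =>
    convert add_mem hu hv using 1
    simp only [Ring.lie_def]
    noncomm_ring

theorem selfAdjoint_pow_three_eq_top [IsSimpleRing R] {a b : R} (ha : a ∈ selfAdjoint R)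
    (hb : b ∈ selfAdjoint R) (hab : ¬Commute a b) : (selfAdjoint R).toIntSubmodule ^ 3 = ⊤ := by
  set S := (selfAdjoint R).toIntSubmodule
  have h_one : 1 ≤ S := Submodule.one_le.2 (.one R)
  have hlie : ∀ x y : R, ⁅x, y⁆ ∈ S ^ 2 := by
    rw [sq]
    exact lie_mem_of_not_commute (U := (S * S).toAddSubgroup)
      (fun u hu x => lie_mem_selfAdjoint_mul_selfAdjoint hu x)
      (le_mul_of_one_le_left' h_one ha) (le_mul_of_one_le_left' h_one hb) hab
  refine Submodule.toAddSubgroup_eq_top.1 (eq_top_of_mul_lie_mem hab fun x y => ?_)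
  have hlie_mul : ⁅y, x⁆ * a ∈ S ^ 3 := pow_succ S 2 ▸ Submodule.mul_mem_mul (hlie y x) ha
  have hlie_three : ⁅y, x * a⁆ ∈ S ^ 3 := pow_le_pow_right' h_one (by simp) (hlie y (x * a))
  change x * ⁅y, a⁆ ∈ S ^ 3
  convert sub_mem hlie_three hlie_mul using 1
  simp only [Ring.lie_def]
  noncomm_ring

theorem jordanKK12_le_skewAdjoint_pow_two :
    (jordanKK12 R).toIntSubmodule ≤ (skewAdjoint R).toIntSubmodule ^ 2 := by
  refine (AddSubgroup.closure_le ((skewAdjoint R).toIntSubmodule ^ 2).toAddSubgroup).2 ?_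
  rintro _ ⟨a, ha, b, hb, rfl⟩
  rw [sq]
  exact add_mem (Submodule.mul_mem_mul ha hb) (Submodule.mul_mem_mul hb ha)

end Powers

end SkewJordan

theorem stmt_12_general {R : Type*} [Ring R] [StarRing R] [IsSimpleRing R] [Invertible (2 : R)]
    (hK : ∃ a ∈ skewSet12 R, ∃ b ∈ skewSet12 R, a * b ≠ b * a)
    (hS : ∃ a ∈ {r : R | star r = r}, ∃ b ∈ {r : R | star r = r}, a * b ≠ b * a) :
    (AddSubgroup.closure {z : R | ∃ p ∈ jordanKK12 R, ∃ q ∈ jordanKK12 R,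
        ∃ w ∈ jordanKK12 R, z = p * q * w} : Set R) = Set.univ ∧
    (AddSubgroup.closure {z : R | ∃ a₁ ∈ skewSet12 R, ∃ a₂ ∈ skewSet12 R,
        ∃ a₃ ∈ skewSet12 R, ∃ a₄ ∈ skewSet12 R, ∃ a₅ ∈ skewSet12 R, ∃ a₆ ∈ skewSet12 R,
        z = a₁ * a₂ * a₃ * a₄ * a₅ * a₆} : Set R) = Set.univ := by
  obtain ⟨a, ha, b, hb, hab⟩ := hK
  obtain ⟨c, hc, d, hd, hcd⟩ := hS
  have hle : (selfAdjoint R).toIntSubmodule ≤ (jordanKK12 R).toIntSubmodule :=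
    SkewJordan.selfAdjoint_le_jordanKK12 ha hb hab
  have hJ : (jordanKK12 R).toIntSubmodule ^ 3 = ⊤ := top_unique <|
    (SkewJordan.selfAdjoint_pow_three_eq_top hc hd hcd).ge.trans (pow_le_pow_left' hle 3)
  have hK6 : (skewAdjoint R).toIntSubmodule ^ 6 = ⊤ := top_unique <| calc
    ⊤ = (jordanKK12 R).toIntSubmodule ^ 3 := hJ.symm
    _ ≤ ((skewAdjoint R).toIntSubmodule ^ 2) ^ 3 :=
      pow_le_pow_left' SkewJordan.jordanKK12_le_skewAdjoint_pow_two 3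
    _ = (skewAdjoint R).toIntSubmodule ^ 6 := (pow_mul _ 2 3).symm
  constructor
  · refine SkewJordan.closure_eq_univ_of_pow_eq_top hJ fun f => ?_
    exact ⟨f 0, (f 0).2, f 1, (f 1).2, f 2, (f 2).2, by simp [List.ofFn_succ, mul_assoc]⟩
  · refine SkewJordan.closure_eq_univ_of_pow_eq_top hK6 fun f => ?_
    exact ⟨f 0, (f 0).2, f 1, (f 1).2, f 2, (f 2).2, f 3, (f 3).2, f 4, (f 4).2, f 5, (f 5).2,
      by simp [List.ofFn_succ, mul_assoc]⟩

/-- If `R` is simple, `dim_{Z(R)} R > 4` and `S` is not a commutative set, then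
`(K∘K)³ = R`; in particular `K⁶ = R`. -/
theorem stmt_12 (F R : Type*) [Field F] [Ring R] [Algebra F R] [StarRing R]
    [IsSimpleRing R]
    (hchar : (2 : F) ≠ 0)
    (hfirst : Set.center R ⊆ {r : R | star r = r})
    (hproper : {r : R | star r = r} ≠ Set.univ)
    (hdim : 4 < Module.rank (Subring.center R) R)
    (hnc : ∃ a ∈ {r : R | star r = r}, ∃ b ∈ {r : R | star r = r}, a * b ≠ b * a) :
    (AddSubgroup.closure {z : R | ∃ p ∈ jordanKK12 R, ∃ q ∈ jordanKK12 R,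
        ∃ w ∈ jordanKK12 R, z = p * q * w} : Set R) = Set.univ ∧
    (AddSubgroup.closure {z : R | ∃ a₁ ∈ skewSet12 R, ∃ a₂ ∈ skewSet12 R,
        ∃ a₃ ∈ skewSet12 R, ∃ a₄ ∈ skewSet12 R, ∃ a₅ ∈ skewSet12 R, ∃ a₆ ∈ skewSet12 R,
        z = a₁ * a₂ * a₃ * a₄ * a₅ * a₆} : Set R) = Set.univ := by
  have htwo : algebraMap F R 2 = 2 := map_ofNat _ 2
  let := invertibleOfNonzero hchar
  let : Invertible (2 : R) := (Invertible.map (algebraMap F R) 2).copy 2 htwo.symm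
  refine stmt_12_general ?_ hnc
  by_contra! hK
  exact hdim.not_ge (SkewJordan.rank_le_four_of_skewAdjoint_commute hK)
end

section
/- Let F be a field of characteristic ≠ 2 and R a simple associative unital F-algebra with an involution * of the first kind, with S ⊊ R, with dim_{Z(R)} R > 4, and assume S is not a commutative set. If in addition there exist x, y ∈ S such that xy − yx ≠ 0 and xsy ∈ S² for every s ∈ S, then (K∘K)² = R; in particular K⁴ = R. -/
/-- The set of skew-symmetric elements. -/
def skewSet13 (R : Type*) [Ring R] [StarRing R] : Set R := {r : R | star r = -r}

/-- `K∘K`: the additive subgroup generated by all `ab + ba` with `a, b ∈ K`. -/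
def jordanKK13 (R : Type*) [Ring R] [StarRing R] : AddSubgroup R :=
  AddSubgroup.closure {z : R | ∃ a ∈ skewSet13 R, ∃ b ∈ skewSet13 R, z = a * b + b * a}

/-! The additive groups `S²` and `K²` are Lie ideals of `R`, because `R = S + K`. A Lie ideal `U`
with `c * R ⊆ U` for some `c ≠ 0` is all of `R`; for `S²` the hypothesis on `x` and `y` gives this
with `c = x * y - y * x`. A Lie ideal of `R` is central or contains every commutator (Herstein). If
`K²` is central, some `a ∈ K` has invertible central square and centralizer spanned by `1` and `a`
over the center; splitting `R` under conjugation by `a` then bounds its dimension by four. Otherwise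
`K²` contains every commutator, hence `K` since `S² = R`, hence `d * R` for a nonzero `d ∈ K`,
and so `K² = R`. Taking symmetric parts yields `S ⊆ K∘K`. -/

section AddSelf

variable {R : Type*} [Ring R] [Invertible (2 : R)]

theorem exists_add_self_eq (x : R) : ∃ y, y + y = x :=
  ⟨⅟2 * x, by rw [← add_mul, invOf_two_add_invOf_two, one_mul]⟩

theorem add_self_inj_of_invertible_two {x y : R} : x + x = y + y ↔ x = y := by
  rw [← two_mul, ← two_mul, (isUnit_of_invertible (2 : R)).mul_right_inj]

theorem add_self_eq_zero_of_invertible_two {x : R} : x + x = 0 ↔ x = 0 := by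
  simpa using add_self_inj_of_invertible_two (x := x) (y := 0)

end AddSelf

section Simple

variable {R : Type*} [Ring R] [IsSimpleRing R]

theorem eq_top_of_forall_mul_mul_mem {U : AddSubgroup R} {c : R} (hc : c ≠ 0)
    (h : ∀ a b, a * c * b ∈ U) : U = ⊤ := by
  have hspan : TwoSidedIdeal.span {c} = ⊤ :=
    (eq_bot_or_eq_top _).resolve_left fun hbot => hc <| by
      simpa [hbot, TwoSidedIdeal.mem_bot] using TwoSidedIdeal.subset_span (Set.mem_singleton c)
  refine (AddSubgroup.eq_top_iff' U).2 fun x => ?_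
  have hx : x ∈ TwoSidedIdeal.span {c} := hspan ▸ TwoSidedIdeal.mem_top R
  rw [TwoSidedIdeal.mem_span_iff_mem_addSubgroup_closure] at hx
  refine (AddSubgroup.closure_le U).2 ?_ hx
  rintro _ ⟨_, ⟨a, -, _, rfl, rfl⟩, b, -, rfl⟩
  exact h a b

theorem eq_zero_or_eq_zero_of_forall_mul_mul_eq_zero {a b : R} (h : ∀ x, a * x * b = 0) :
    a = 0 ∨ b = 0 := by
  refine or_iff_not_imp_right.2 fun hb => ?_
  have htop : (AddMonoidHom.mulLeft a).ker = ⊤ :=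
    eq_top_of_forall_mul_mul_mem hb fun x y => by simp [← mul_assoc, h]
  have hone : (1 : R) ∈ (AddMonoidHom.mulLeft a).ker := htop ▸ AddSubgroup.mem_top 1
  simpa using hone

theorem exists_center_smul_eq_one {z : R} (hz : z ∈ Subring.center R) (hz0 : z ≠ 0) :
    ∃ v : Subring.center R, v • z = 1 := by
  obtain ⟨v, hv⟩ := (IsSimpleRing.isField_center R).mul_inv_cancel (a := ⟨z, hz⟩)
    (by simpa [Subtype.ext_iff] using hz0)
  exact ⟨v, congrArg Subtype.val ((mul_comm v _).trans hv)⟩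

theorem isUnit_of_mem_center {z : R} (hz : z ∈ Subring.center R) (hz0 : z ≠ 0) : IsUnit z := by
  obtain ⟨v, hv⟩ := exists_center_smul_eq_one hz hz0
  exact isUnit_iff_exists.2 ⟨v, (Subring.mem_center_iff.1 hz v).symm.trans hv, hv⟩

theorem exists_smul_eq_of_mul_mem_center {a b : R} (haa : a * a ∈ Subring.center R)
    (haa0 : a * a ≠ 0) (hba : b * a ∈ Subring.center R) : ∃ z : Subring.center R, z • a = b := by
  obtain ⟨v, hv⟩ := exists_center_smul_eq_one haa haa0
  refine ⟨v * ⟨b * a, hba⟩, ?_⟩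
  calc (v * ⟨b * a, hba⟩) • a = v • (b * a * a) := mul_smul _ _ _
    _ = b * (v • (a * a)) := by rw [mul_smul_comm, mul_assoc]
    _ = b := by rw [hv, mul_one]

/-- Polarising, if all squares in `A` vanish then any two elements of `A` anticommute, whence
`a R a = 0` for every `a ∈ A`. -/
theorem exists_mul_self_ne_zero_of_sup_eq_top [Invertible (2 : R)] {A B : Submodule ℤ R}
    (htop : A ⊔ B = ⊤) (hAB : ∀ a ∈ A, ∀ b ∈ B, a * b + b * a ∈ A) (hA : A ≠ ⊥) :
    ∃ a ∈ A, a * a ≠ 0 := by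
  by_contra! hsq
  have hanti : ∀ a ∈ A, ∀ b ∈ A, a * b + b * a = 0 := fun a ha b hb => by
    calc a * b + b * a = (a + b) * (a + b) - a * a - b * b := by noncomm_ring
      _ = 0 := by simp [hsq _ (A.add_mem ha hb), hsq a ha, hsq b hb]
  obtain ⟨a, ha, ha0⟩ := A.ne_bot_iff.1 hA
  have hzero : ∀ r, a * r * a = 0 := fun r => by
    obtain ⟨p, hp, b, hb, rfl⟩ := Submodule.mem_sup.1 (htop ▸ Submodule.mem_top (x := r))
    have hap : a * p * a = 0 := by
      calc a * p * a = (a * p + p * a) * a - p * (a * a) := by noncomm_ring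
        _ = 0 := by simp [hanti a ha p hp, hsq a ha]
    have hab : a * b * a = 0 := add_self_eq_zero_of_invertible_two.1 <| by
      calc a * b * a + a * b * a
          = (a * (a * b + b * a) + (a * b + b * a) * a) - a * a * b - b * (a * a) := by
            noncomm_ring
        _ = 0 := by simp [hanti a ha _ (hAB a ha b hb), hsq a ha]
    rw [mul_add, add_mul, hap, hab, add_zero]
  exact ha0 (or_self_iff.1 (eq_zero_or_eq_zero_of_forall_mul_mul_eq_zero hzero))

end Simple

section LieIdeal

attribute [local instance] LieRing.ofAssociativeRing

variable {R : Type*} [Ring R] {U : LieIdeal ℤ R}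

theorem lie_mem_of_normalizer_eq_top (h : U.normalizer = ⊤) (x y : R) : ⁅x, y⁆ ∈ U :=
  (U.mem_normalizer y).1 (h ▸ LieSubmodule.mem_top y) x

theorem mul_mem_normalizer {x y : R} (hx : x ∈ U.normalizer) (hy : y ∈ U.normalizer) :
    x * y ∈ U.normalizer := fun r => by
  have hsum : ⁅r, x * y⁆ = ⁅y * r, x⁆ + ⁅r * x, y⁆ := by
    simp only [Ring.lie_def]
    noncomm_ring
  exact hsum ▸ U.add_mem (hx (y * r)) (hy (r * x))

theorem lie_mem_mul_self_of_sup_eq_top {A B C : Submodule ℤ R}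
    (htop : B ⊔ C = ⊤) (hB : ∀ a ∈ A, ∀ b ∈ B, a * b + b * a ∈ A)
    (hC : ∀ a ∈ A, ∀ c ∈ C, ⁅a, c⁆ ∈ A) (r : R) {u : R} (hu : u ∈ A * A) : ⁅r, u⁆ ∈ A * A := by
  obtain ⟨b, hb, c, hc, rfl⟩ := Submodule.mem_sup.1 (htop ▸ Submodule.mem_top (x := r))
  induction hu using Submodule.mul_induction_on' with
  | mem_mul_mem a ha a' ha' =>
    have hsum : ⁅b + c, a * a'⁆
        = (a * b + b * a) * a' - a * (a' * b + b * a') - ⁅a, c⁆ * a' - a * ⁅a', c⁆ := by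
      simp only [Ring.lie_def]
      noncomm_ring
    rw [hsum]
    refine sub_mem (sub_mem (sub_mem ?_ ?_) ?_) ?_
    · exact Submodule.mul_mem_mul (hB a ha b hb) ha'
    · exact Submodule.mul_mem_mul ha (hB a' ha' b hb)
    · exact Submodule.mul_mem_mul (hC a ha c hc) ha'
    · exact Submodule.mul_mem_mul ha (hC a' ha' c hc)
  | add u _ v _ hu hv => exact lie_add (b + c) u v ▸ add_mem hu hv

variable [IsSimpleRing R]

theorem lieIdeal_eq_top_of_forall_mul_mem {c : R} (hc : c ≠ 0) (h : ∀ r, c * r ∈ U) : U = ⊤ := by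
  suffices U.toAddSubgroup = ⊤ from eq_top_iff.2 fun x _ =>
    (show x ∈ U.toAddSubgroup from this ▸ AddSubgroup.mem_top x)
  refine eq_top_of_forall_mul_mul_mem hc fun a b => ?_
  have hsum : a * c * b = ⁅a, c * b⁆ + c * (b * a) := by
    rw [Ring.lie_def]
    noncomm_ring
  exact hsum ▸ U.add_mem (U.lie_mem (h b)) (h (b * a))

theorem normalizer_eq_top_of_lie_ne_zero {u v : R} (hu : u ∈ U) (hv : v ∈ U)
    (huv : ⁅u, v⁆ ≠ 0) : U.normalizer = ⊤ := by
  have hle := U.le_normalizer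
  refine lieIdeal_eq_top_of_forall_mul_mem huv fun r => ?_
  have hsum : ⁅u, v⁆ * r = ⁅u, v * r⁆ - v * ⁅u, r⁆ := by
    simp only [Ring.lie_def]
    noncomm_ring
  rw [hsum]
  exact U.normalizer.sub_mem (hle (lie_mem_left ℤ R U u _ hu))
    (mul_mem_normalizer (hle hv) (hle (lie_mem_left ℤ R U u r hu)))

theorem mem_center_of_forall_lie_lie_eq_zero [Invertible (2 : R)] {u : R}
    (h : ∀ r : R, ⁅u, ⁅u, r⁆⁆ = 0) : u ∈ Subring.center R := by
  have hmul : ∀ r s : R, ⁅u, r⁆ * ⁅u, s⁆ = 0 := fun r s =>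
    add_self_eq_zero_of_invertible_two.1 <| by
      calc ⁅u, r⁆ * ⁅u, s⁆ + ⁅u, r⁆ * ⁅u, s⁆
          = ⁅u, ⁅u, r * s⁆⁆ - ⁅u, ⁅u, r⁆⁆ * s - r * ⁅u, ⁅u, s⁆⁆ := by
            simp only [Ring.lie_def]
            noncomm_ring
        _ = 0 := by simp [h]
  refine Subring.mem_center_iff.2 fun r => ?_
  have hzero : ∀ s, ⁅u, r⁆ * s * ⁅u, r⁆ = 0 := fun s => by
    calc ⁅u, r⁆ * s * ⁅u, r⁆ = ⁅u, r⁆ * ⁅u, s * r⁆ - ⁅u, r⁆ * ⁅u, s⁆ * r := by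
          simp only [Ring.lie_def]
          noncomm_ring
      _ = 0 := by simp [hmul]
  exact (sub_eq_zero.1 (or_self_iff.1 (eq_zero_or_eq_zero_of_forall_mul_mul_eq_zero hzero))).symm

theorem normalizer_eq_top_or_subset_center [Invertible (2 : R)] (U : LieIdeal ℤ R) :
    U.normalizer = ⊤ ∨ (U : Set R) ⊆ Subring.center R := by
  by_cases! hcomm : ∀ u ∈ U, ∀ v ∈ U, ⁅u, v⁆ = 0
  · exact .inr fun u hu => mem_center_of_forall_lie_lie_eq_zero fun r =>
      hcomm u hu _ (lie_mem_left ℤ R U u r hu)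
  · obtain ⟨u, hu, v, hv, huv⟩ := hcomm
    exact .inl (normalizer_eq_top_of_lie_ne_zero hu hv huv)

end LieIdeal

section Anticommutant

variable {R : Type*} [Ring R]

/-- The additive group of elements anticommuting with `a`. Anticommutation is expressed as
`SemiconjBy a p (-p)`. -/
def anticommutant (a : R) : Submodule ℤ R :=
  AddSubgroup.toIntSubmodule
    { carrier := {p | SemiconjBy a p (-p)}
      zero_mem' := by simp
      add_mem' := fun hp hq => by simpa [add_comm] using SemiconjBy.add_right hp hq
      neg_mem' := fun hp => SemiconjBy.neg_right hp }

theorem mem_anticommutant_iff {a p : R} : p ∈ anticommutant a ↔ SemiconjBy a p (-p) := Iff.rfl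

theorem commute_mul_of_mem_anticommutant {a p q : R} (hp : p ∈ anticommutant a)
    (hq : q ∈ anticommutant a) : Commute a (p * q) :=
  (SemiconjBy.mul_right hp hq).trans (by rw [neg_mul_neg])

/-- As `a * a` is central, conjugation by `a` is an involution; the summands are its eigenspaces. -/
theorem anticommutant_sup_centralizer_eq_top [Invertible (2 : R)] (a : Rˣ)
    (ha : (a * a : R) ∈ Subring.center R) :
    anticommutant (a : R) ⊔ (Subalgebra.centralizer ℤ {(a : R)}).toSubmodule = ⊤ := by
  refine eq_top_iff.2 fun r _ => ?_
  obtain ⟨q, rfl⟩ := exists_add_self_eq r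
  set q' : R := a * q * ↑a⁻¹
  have hq : SemiconjBy (a : R) q q' := a.mk_semiconjBy q
  have hq' : SemiconjBy (a : R) q' q := by
    calc a * q' = (a * a) * q * ↑a⁻¹ := by simp only [q', mul_assoc]
      _ = q * a := by simp [← Subring.mem_center_iff.1 ha, mul_assoc]
  refine Submodule.mem_sup.2 ⟨q - q', ?_, q + q', ?_, by abel⟩
  · rw [mem_anticommutant_iff, neg_sub]
    exact hq.sub_right hq'
  · rw [Subalgebra.mem_toSubmodule, Subalgebra.mem_centralizer_iff]
    rintro _ rfl
    rw [(hq.add_right hq').eq, add_comm]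

variable [IsSimpleRing R] [Invertible (2 : R)]

theorem exists_mem_anticommutant_mul_self_ne_zero (a : Rˣ)
    (ha : (a * a : R) ∈ Subring.center R) (hbot : anticommutant (a : R) ≠ ⊥) :
    ∃ q ∈ anticommutant (a : R), q * q ≠ 0 := by
  refine exists_mul_self_ne_zero_of_sup_eq_top (anticommutant_sup_centralizer_eq_top a ha)
    (fun p hp c hc => ?_) hbot
  have hac : Commute (a : R) c := hc a rfl
  have hpc := SemiconjBy.mul_right hp hac
  have hcp := SemiconjBy.mul_right hac hp
  rw [mem_anticommutant_iff, neg_add]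
  simpa using hpc.add_right hcp

theorem mul_self_mem_center_of_mem_anticommutant {a : Rˣ}
    (hcent : ∀ c, Commute (a : R) c → c ∈ Submodule.span (Subring.center R) {1, (a : R)})
    {q : R} (hq : q ∈ anticommutant (a : R)) : q * q ∈ Subring.center R := by
  obtain ⟨x, y, hxy⟩ := Submodule.mem_span_pair.1
    (hcent _ (commute_mul_of_mem_anticommutant hq hq))
  have haq : (a * q : R) = -(q * a) := by rw [SemiconjBy.eq hq, neg_mul]
  have hyaq : y • (a * q : R) = 0 := add_self_eq_zero_of_invertible_two.1 <| by
    calc y • (a * q : R) + y • (a * q : R)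
        = (x • 1 + y • (a : R)) * q - q * (x • 1 + y • (a : R)) := by
          simp only [haq, smul_neg, add_mul, mul_add, Algebra.smul_mul_assoc, one_mul,
            Algebra.mul_smul_comm, mul_one]
          abel
      _ = 0 := by rw [hxy, mul_assoc, sub_self]
  rcases eq_or_ne (y : R) 0 with hy | hy
  · rw [← hxy, Subring.smul_def y, hy, Subring.smul_def x]
    simp
  · have hq0 : q = 0 := by
      rwa [Subring.smul_def, smul_eq_mul, (isUnit_of_mem_center y.2 hy).mul_right_eq_zero,
        a.isUnit.mul_right_eq_zero] at hyaq
    simp [hq0]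

theorem exists_anticommutant_subset_span (a : Rˣ)
    (ha : (a * a : R) ∈ Subring.center R)
    (hcent : ∀ c, Commute (a : R) c → c ∈ Submodule.span (Subring.center R) {1, (a : R)}) :
    ∃ q : R, (anticommutant (a : R) : Set R) ⊆
      Submodule.span (Subring.center R) {q, q * (a : R)} := by
  by_cases hbot : anticommutant (a : R) = ⊥
  · exact ⟨0, by simp [hbot]⟩
  obtain ⟨q, hq, hqq⟩ := exists_mem_anticommutant_mul_self_ne_zero a ha hbot
  obtain ⟨w, hw⟩ := exists_center_smul_eq_one
    (mul_self_mem_center_of_mem_anticommutant hcent hq) hqq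
  refine ⟨q, fun p hp => ?_⟩
  obtain ⟨x, y, hxy⟩ := Submodule.mem_span_pair.1
    (hcent _ (commute_mul_of_mem_anticommutant hq hp))
  refine Submodule.mem_span_pair.2 ⟨w * x, w * y, ?_⟩
  calc (w * x) • q + (w * y) • (q * a : R)
      = w • (q * (x • 1 + y • (a : R))) := by simp [mul_add, mul_smul, smul_add]
    _ = (w • (q * q)) * p := by rw [hxy, smul_mul_assoc, mul_assoc]
    _ = p := by rw [hw, one_mul]

theorem rank_le_four_of_centralizer_le_span (a : Rˣ) (ha : (a * a : R) ∈ Subring.center R)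
    (hcent : ∀ c, Commute (a : R) c → c ∈ Submodule.span (Subring.center R) {1, (a : R)}) :
    Module.rank (Subring.center R) R ≤ 4 := by
  classical
  obtain ⟨q, hq⟩ := exists_anticommutant_subset_span a ha hcent
  have hspan : Submodule.span (Subring.center R) (({1, (a : R)} ∪ {q, q * ↑a} : Finset R) : Set R)
      = ⊤ := by
    refine Submodule.eq_top_iff'.2 fun r => ?_
    obtain ⟨p, hp, c, hc, rfl⟩ := Submodule.mem_sup.1
      (anticommutant_sup_centralizer_eq_top a ha ▸ Submodule.mem_top (x := r))
    rw [add_comm, Finset.coe_union, Submodule.span_union]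
    exact Submodule.add_mem_sup (by simpa using hcent c (hc a rfl)) (by simpa using hq hp)
  calc Module.rank (Subring.center R) R
      ≤ (({1, (a : R)} ∪ {q, q * ↑a} : Finset R).card : Cardinal) := by
        rw [← rank_top, ← hspan]
        exact rank_span_finset_le _
    _ ≤ 4 := by
        exact_mod_cast (Finset.card_union_le _ _).trans
          (add_le_add Finset.card_le_two Finset.card_le_two)

end Anticommutant

section Involution

attribute [local instance] LieRing.ofAssociativeRing

variable {R : Type*} [Ring R] [StarRing R] [Invertible (2 : R)]

theorem exists_add_self_eq_of_star_eq {s : R} (hs : star s = s) : ∃ t, star t = t ∧ t + t = s := by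
  obtain ⟨t, rfl⟩ := exists_add_self_eq s
  exact ⟨t, add_self_inj_of_invertible_two.1 (by rwa [star_add] at hs), rfl⟩

theorem exists_add_self_eq_of_star_eq_neg {k : R} (hk : star k = -k) :
    ∃ l, star l = -l ∧ l + l = k := by
  obtain ⟨l, rfl⟩ := exists_add_self_eq k
  exact ⟨l, add_self_inj_of_invertible_two.1 (by rwa [star_add, neg_add] at hk), rfl⟩

omit [Invertible (2 : R)] in
theorem star_mul_add_mul_eq_neg {k s : R} (hk : star k = -k) (hs : star s = s) :
    star (k * s + s * k) = -(k * s + s * k) := by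
  simp [hk, hs]

variable (R)

theorem selfAdjoint_sup_skewAdjoint_eq_top :
    selfAdjoint.submodule ℤ R ⊔ skewAdjoint.submodule ℤ R = ⊤ := by
  refine eq_top_iff.2 fun r _ => ?_
  obtain ⟨q, rfl⟩ := exists_add_self_eq r
  refine Submodule.mem_sup.2 ⟨q + star q, ?_, q - star q, ?_, by abel⟩
  · exact IsSelfAdjoint.add_star_self q
  · exact skewAdjoint.mem_iff.2 (by simp)

/-- The subgroup `S²` generated by products of two self-adjoint elements, as a Lie ideal. -/
def selfAdjointSq : LieIdeal ℤ R where
  toSubmodule := selfAdjoint.submodule ℤ R * selfAdjoint.submodule ℤ R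
  lie_mem := lie_mem_mul_self_of_sup_eq_top (selfAdjoint_sup_skewAdjoint_eq_top R)
    (fun a (ha : star a = a) b (hb : star b = b) =>
      show star (a * b + b * a) = _ by simp [ha, hb, add_comm])
    (fun a (ha : star a = a) c (hc : star c = -c) =>
      show star ⁅a, c⁆ = _ by
        simp only [Ring.lie_def, star_sub, star_mul, ha, hc]
        noncomm_ring) _

/-- The subgroup `K²` generated by products of two skew-adjoint elements, as a Lie ideal. -/
def skewAdjointSq : LieIdeal ℤ R where
  toSubmodule := skewAdjoint.submodule ℤ R * skewAdjoint.submodule ℤ R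
  lie_mem := lie_mem_mul_self_of_sup_eq_top (selfAdjoint_sup_skewAdjoint_eq_top R)
    (fun _ hk _ hs => star_mul_add_mul_eq_neg hk hs)
    (fun a (ha : star a = -a) c (hc : star c = -c) =>
      show star ⁅a, c⁆ = _ by simp [Ring.lie_def, ha, hc]) _

variable {R}

theorem mul_mem_selfAdjointSq {s t : R} (hs : star s = s) (ht : star t = t) :
    s * t ∈ selfAdjointSq R :=
  Submodule.mul_mem_mul (M := selfAdjoint.submodule ℤ R) (N := selfAdjoint.submodule ℤ R) hs ht

theorem mul_mem_skewAdjointSq {k l : R} (hk : star k = -k) (hl : star l = -l) :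
    k * l ∈ skewAdjointSq R :=
  Submodule.mul_mem_mul (M := skewAdjoint.submodule ℤ R) (N := skewAdjoint.submodule ℤ R) hk hl

theorem lieIdeal_eq_top_of_forall_selfAdjoint_skewAdjoint [IsSimpleRing R] {U : LieIdeal ℤ R}
    {c : R} (hc : c ≠ 0) (hS : ∀ s, star s = s → c * (s + s) ∈ U)
    (hK : ∀ k, star k = -k → c * (k + k) ∈ U) : U = ⊤ := by
  refine lieIdeal_eq_top_of_forall_mul_mem hc fun r => ?_
  obtain ⟨q, rfl⟩ := exists_add_self_eq r
  obtain ⟨s, hs, k, hk, rfl⟩ := Submodule.mem_sup.1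
    (selfAdjoint_sup_skewAdjoint_eq_top R ▸ Submodule.mem_top (x := q))
  rw [add_add_add_comm, mul_add]
  exact add_mem (hS s hs) (hK k hk)

theorem selfAdjointSq_eq_top [IsSimpleRing R] {x y : R} (hx : star x = x) (hy : star y = y)
    (hne : ⁅x, y⁆ ≠ 0) (hmem : ∀ s, star s = s → x * s * y ∈ selfAdjointSq R) :
    selfAdjointSq R = ⊤ := by
  refine lieIdeal_eq_top_of_forall_selfAdjoint_skewAdjoint hne (fun s hs => ?_) fun k hk => ?_
  · have hxs : ⁅x * s, y⁆ ∈ selfAdjointSq R := lie_mem_left ℤ R _ _ _ (mul_mem_selfAdjointSq hx hs)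
    have hyxs : y * x * s ∈ selfAdjointSq R := by
      have hsum : y * x * s = x * s * y - ⁅x * s, y⁆ := by
        rw [Ring.lie_def]
        noncomm_ring
      exact hsum ▸ sub_mem (hmem s hs) hxs
    have hxys : (x * y + y * x) * s ∈ selfAdjointSq R :=
      mul_mem_selfAdjointSq (by simp [hx, hy, add_comm]) hs
    have hsum : ⁅x, y⁆ * s = (x * y + y * x) * s - y * x * s - y * x * s := by
      rw [Ring.lie_def]
      noncomm_ring
    have hcs : ⁅x, y⁆ * s ∈ selfAdjointSq R := hsum ▸ sub_mem (sub_mem hxys hyxs) hyxs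
    exact mul_add ⁅x, y⁆ s s ▸ add_mem hcs hcs
  · have hxy : ⁅x, y⁆ ∈ selfAdjointSq R :=
      sub_mem (mul_mem_selfAdjointSq hx hy) (mul_mem_selfAdjointSq hy hx)
    have hanti : ⁅x, y⁆ * k + k * ⁅x, y⁆ ∈ selfAdjointSq R := by
      rw [← one_mul (⁅x, y⁆ * k + k * ⁅x, y⁆)]
      exact mul_mem_selfAdjointSq (star_one R) (by
        simp only [Ring.lie_def, star_add, star_mul, star_sub, hx, hy, hk]
        noncomm_ring)
    have hsum : ⁅x, y⁆ * (k + k) = ⁅⁅x, y⁆, k⁆ + (⁅x, y⁆ * k + k * ⁅x, y⁆) := by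
      rw [Ring.lie_def ⁅x, y⁆ k]
      noncomm_ring
    exact hsum ▸ add_mem (lie_mem_left ℤ R _ _ _ hxy) hanti

theorem sub_star_mem_of_mem_selfAdjointSq {U : LieIdeal ℤ R} (hU : U.normalizer = ⊤) {w : R}
    (hw : w ∈ selfAdjointSq R) : w - star w ∈ U := by
  refine Submodule.mul_induction_on hw (fun s hs t ht => ?_) fun v w hv hw => ?_
  · rw [star_mul, selfAdjoint.mem_iff.1 hs, selfAdjoint.mem_iff.1 ht]
    exact lie_mem_of_normalizer_eq_top hU s t
  · rw [star_add, add_sub_add_comm]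
    exact add_mem hv hw

theorem mem_skewAdjointSq_of_star_eq_neg (hS : selfAdjointSq R = ⊤)
    (hnorm : (skewAdjointSq R).normalizer = ⊤) {k : R} (hk : star k = -k) :
    k ∈ skewAdjointSq R := by
  obtain ⟨l, hl, rfl⟩ := exists_add_self_eq_of_star_eq_neg hk
  have hmem := sub_star_mem_of_mem_selfAdjointSq hnorm (hS ▸ LieSubmodule.mem_top l)
  rwa [hl, sub_neg_eq_add] at hmem

theorem skewAdjointSq_eq_top [IsSimpleRing R] (hS : selfAdjointSq R = ⊤)
    (hnorm : (skewAdjointSq R).normalizer = ⊤) {d : R} (hd : star d = -d) (hd0 : d ≠ 0) :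
    skewAdjointSq R = ⊤ := by
  refine lieIdeal_eq_top_of_forall_selfAdjoint_skewAdjoint hd0 (fun s hs => ?_) fun k hk => ?_
  · have hlie : ⁅d, s⁆ ∈ skewAdjointSq R := lie_mem_of_normalizer_eq_top hnorm d s
    have hanti : d * s + s * d ∈ skewAdjointSq R :=
      mem_skewAdjointSq_of_star_eq_neg hS hnorm (star_mul_add_mul_eq_neg hd hs)
    have hsum : d * (s + s) = ⁅d, s⁆ + (d * s + s * d) := by
      rw [Ring.lie_def]
      noncomm_ring
    exact hsum ▸ add_mem hlie hanti
  · exact mul_mem_skewAdjointSq hd (by rw [star_add, hk, neg_add])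

theorem add_star_mem_jordanKK13 {w : R} (hw : w ∈ skewAdjointSq R) :
    w + star w ∈ jordanKK13 R := by
  refine Submodule.mul_induction_on hw (fun k hk l hl => ?_) fun v w hv hw => ?_
  · refine AddSubgroup.subset_closure ⟨k, hk, l, hl, ?_⟩
    rw [star_mul, skewAdjoint.mem_iff.1 hk, skewAdjoint.mem_iff.1 hl, neg_mul_neg]
  · rw [star_add, add_add_add_comm]
    exact add_mem hv hw

theorem mem_jordanKK13_of_star_eq (hK : skewAdjointSq R = ⊤) {s : R} (hs : star s = s) :
    s ∈ jordanKK13 R := by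
  obtain ⟨t, ht, rfl⟩ := exists_add_self_eq_of_star_eq hs
  have hmem := add_star_mem_jordanKK13 (hK ▸ LieSubmodule.mem_top t)
  rwa [ht] at hmem

theorem jordanKK13_mul_jordanKK13_eq_top (hS : selfAdjointSq R = ⊤) (hK : skewAdjointSq R = ⊤) :
    AddSubgroup.toIntSubmodule (jordanKK13 R) * AddSubgroup.toIntSubmodule (jordanKK13 R) = ⊤ :=
  have hle : selfAdjoint.submodule ℤ R ≤ AddSubgroup.toIntSubmodule (jordanKK13 R) := fun _ hs =>
    mem_jordanKK13_of_star_eq hK hs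
  have hSS : selfAdjoint.submodule ℤ R * selfAdjoint.submodule ℤ R = ⊤ :=
    congrArg LieSubmodule.toSubmodule hS
  top_le_iff.1 (hSS.ge.trans (mul_le_mul' hle hle))

theorem skewAdjoint_mul_mul_mul_eq_top (hK : skewAdjointSq R = ⊤) :
    skewAdjoint.submodule ℤ R * skewAdjoint.submodule ℤ R * skewAdjoint.submodule ℤ R
      * skewAdjoint.submodule ℤ R = ⊤ := by
  have hKK : skewAdjoint.submodule ℤ R * skewAdjoint.submodule ℤ R = ⊤ :=
    congrArg LieSubmodule.toSubmodule hK
  rw [mul_assoc, hKK]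
  exact top_le_iff.1 (le_mul_of_one_le_right' le_top)

theorem rank_le_four_of_skewAdjointSq_subset_center [IsSimpleRing R]
    (hK : (skewAdjointSq R : Set R) ⊆ Subring.center R) {d : R} (hd : star d = -d) (hd0 : d ≠ 0) :
    Module.rank (Subring.center R) R ≤ 4 := by
  obtain ⟨a, ha, haa0⟩ : ∃ a ∈ skewAdjoint.submodule ℤ R, a * a ≠ 0 :=
    exists_mul_self_ne_zero_of_sup_eq_top
      ((sup_comm _ _).trans (selfAdjoint_sup_skewAdjoint_eq_top R))
      (fun _ hk _ hs => star_mul_add_mul_eq_neg hk hs)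
      ((Submodule.ne_bot_iff _).2 ⟨d, hd, hd0⟩)
  have ha : star a = -a := ha
  have haa : a * a ∈ Subring.center R := hK (mul_mem_skewAdjointSq ha ha)
  have hskew : ∀ k, star k = -k → ∃ z : Subring.center R, z • a = k := fun k hk =>
    exists_smul_eq_of_mul_mem_center haa haa0 (hK (mul_mem_skewAdjointSq hk ha))
  have haunit : IsUnit a :=
    ((Commute.refl a).isUnit_mul_iff.1 (isUnit_of_mem_center haa haa0)).1
  refine rank_le_four_of_centralizer_le_span haunit.unit haa fun c hac => ?_
  obtain ⟨s, hs, k, hk, rfl⟩ := Submodule.mem_sup.1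
    (selfAdjoint_sup_skewAdjoint_eq_top R ▸ Submodule.mem_top (x := c))
  obtain ⟨y, rfl⟩ := hskew k hk
  have has : Commute a s := by
    simpa using hac.sub_right ((Commute.refl a).smul_right y)
  obtain ⟨x, hx⟩ := hskew (s * a) (by
    rw [star_mul, ha, show star s = s from hs, neg_mul, has.eq])
  refine Submodule.mem_span_pair.2 ⟨x, y, ?_⟩
  have hxs : x • 1 = s := haunit.mul_right_cancel (by rw [smul_mul_assoc, one_mul, hx])
  simp [hxs]

theorem skewAdjointSq_eq_top_of_four_lt_rank [IsSimpleRing R]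
    (hdim : 4 < Module.rank (Subring.center R) R) (hS : selfAdjointSq R = ⊤) {d : R}
    (hd : star d = -d) (hd0 : d ≠ 0) : skewAdjointSq R = ⊤ :=
  skewAdjointSq_eq_top hS ((normalizer_eq_top_or_subset_center _).resolve_right fun hcentral =>
    hdim.not_ge (rank_le_four_of_skewAdjointSq_subset_center hcentral hd hd0)) hd hd0

end Involution

section Closure

open scoped Pointwise

variable {R : Type*} [Ring R]

theorem coe_closure_mul (M N : Submodule ℤ R) :
    (AddSubgroup.closure {z | ∃ a ∈ M, ∃ b ∈ N, z = a * b} : Set R) = (M * N : Submodule ℤ R) := by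
  rw [Submodule.mul_eq_span_mul_set, ← Submodule.coe_toAddSubgroup,
    Submodule.span_int_eq_addSubgroupClosure]
  congr! 2
  ext z
  simp only [Set.mem_mul, SetLike.mem_coe, eq_comm (b := z)]
  rfl

theorem coe_closure_mul_mul_mul (M N P Q : Submodule ℤ R) :
    (AddSubgroup.closure {z | ∃ a ∈ M, ∃ b ∈ N, ∃ c ∈ P, ∃ d ∈ Q, z = a * b * c * d} : Set R) =
      (M * N * P * Q : Submodule ℤ R) := by
  have hspan : M * N * P * Q =
      Submodule.span ℤ ((M : Set R) * (N : Set R) * (P : Set R) * (Q : Set R)) := by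
    simp only [← Submodule.span_mul_span, Submodule.span_eq]
  rw [hspan, ← Submodule.coe_toAddSubgroup, Submodule.span_int_eq_addSubgroupClosure]
  congr! 2
  ext z
  constructor
  · rintro ⟨a, ha, b, hb, c, hc, d, hd, rfl⟩
    exact Set.mul_mem_mul (Set.mul_mem_mul (Set.mul_mem_mul ha hb) hc) hd
  · rintro ⟨_, ⟨_, ⟨a, ha, b, hb, rfl⟩, c, hc, rfl⟩, d, hd, rfl⟩
    exact ⟨a, ha, b, hb, c, hc, d, hd, rfl⟩

end Closure

theorem stmt_13_general (R : Type*) [Ring R] [StarRing R] [IsSimpleRing R]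
    (htwo : (2 : R) ≠ 0)
    (hdim : 4 < Module.rank (Subring.center R) R)
    (hxy : ∃ x ∈ {r : R | star r = r}, ∃ y ∈ {r : R | star r = r},
      x * y - y * x ≠ 0 ∧
      ∀ s ∈ {r : R | star r = r}, x * s * y ∈
        AddSubgroup.closure {z : R | ∃ a ∈ {r : R | star r = r},
          ∃ b ∈ {r : R | star r = r}, z = a * b}) :
    (AddSubgroup.closure {z : R | ∃ p ∈ jordanKK13 R, ∃ q ∈ jordanKK13 R,
        z = p * q} : Set R) = Set.univ ∧
    (AddSubgroup.closure {z : R | ∃ a₁ ∈ skewSet13 R, ∃ a₂ ∈ skewSet13 R,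
        ∃ a₃ ∈ skewSet13 R, ∃ a₄ ∈ skewSet13 R,
        z = a₁ * a₂ * a₃ * a₄} : Set R) = Set.univ := by
  let _ : Invertible (2 : R) := (isUnit_of_mem_center (ofNat_mem _ 2) htwo).invertible
  obtain ⟨x, hx, y, hy, hne, hmem⟩ := hxy
  have hS : selfAdjointSq R = ⊤ := selfAdjointSq_eq_top hx hy hne fun s hs =>
    (coe_closure_mul (selfAdjoint.submodule ℤ R) (selfAdjoint.submodule ℤ R)).subset (hmem s hs)
  have hd : star (x * y - y * x) = -(x * y - y * x) := by
    simp [show star x = x from hx, show star y = y from hy]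
  have hK : skewAdjointSq R = ⊤ := skewAdjointSq_eq_top_of_four_lt_rank hdim hS hd hne
  constructor
  · rw [← Submodule.top_coe (R := ℤ), ← jordanKK13_mul_jordanKK13_eq_top hS hK]
    exact coe_closure_mul (AddSubgroup.toIntSubmodule (jordanKK13 R))
      (AddSubgroup.toIntSubmodule (jordanKK13 R))
  · rw [← Submodule.top_coe (R := ℤ), ← skewAdjoint_mul_mul_mul_eq_top hK]
    exact coe_closure_mul_mul_mul (skewAdjoint.submodule ℤ R) (skewAdjoint.submodule ℤ R)
      (skewAdjoint.submodule ℤ R) (skewAdjoint.submodule ℤ R)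

/-- If `R` is simple, `dim_{Z(R)} R > 4`, `S` is not a commutative set and there exist
`x, y ∈ S` with `xy − yx ≠ 0` and `xSy ⊆ S²`, then `(K∘K)² = R`; in particular `K⁴ = R`. -/
theorem stmt_13 (F R : Type*) [Field F] [Ring R] [Algebra F R] [StarRing R]
    [IsSimpleRing R]
    (hchar : (2 : F) ≠ 0)
    (hfirst : Set.center R ⊆ {r : R | star r = r})
    (hproper : {r : R | star r = r} ≠ Set.univ)
    (hdim : 4 < Module.rank (Subring.center R) R)
    (hnc : ∃ a ∈ {r : R | star r = r}, ∃ b ∈ {r : R | star r = r}, a * b ≠ b * a)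
    (hxy : ∃ x ∈ {r : R | star r = r}, ∃ y ∈ {r : R | star r = r},
      x * y - y * x ≠ 0 ∧
      ∀ s ∈ {r : R | star r = r}, x * s * y ∈
        AddSubgroup.closure {z : R | ∃ a ∈ {r : R | star r = r},
          ∃ b ∈ {r : R | star r = r}, z = a * b}) :
    (AddSubgroup.closure {z : R | ∃ p ∈ jordanKK13 R, ∃ q ∈ jordanKK13 R,
        z = p * q} : Set R) = Set.univ ∧
    (AddSubgroup.closure {z : R | ∃ a₁ ∈ skewSet13 R, ∃ a₂ ∈ skewSet13 R,
        ∃ a₃ ∈ skewSet13 R, ∃ a₄ ∈ skewSet13 R,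
        z = a₁ * a₂ * a₃ * a₄} : Set R) = Set.univ :=
  stmt_13_general R (map_ofNat (algebraMap F R) 2 ▸ (map_ne_zero (algebraMap F R)).2 hchar) hdim hxy
end
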